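/- Let -1/2 ≤ α < 0. Then the sequence n ↦ C_n(α) is strictly decreasing for n ≥ 3; in particular C_n(α) ≤ C_3(α) = (3/5)·(2α-4)(2α-5)/((2α-2)(2α-3)) for all n ≥ 3. -/

import Mathlib

/-!
Put `x = n` and `b = -2α`. The functional equation of `Γ` makes `C_{n+1}(α) / C_n(α)` the rational
function `(2x + b)(2x + 1 + b)(x + 1)² / (2x (2x + 1)(x + 1 + b)²)`. Denominator minus numerator is
`b ((x + 1)(4x² - x - 1) + b (3x² - 1))`, which is positive for `b > 0` and `x ≥ 1`, so `C_n(α)`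
decreases from `n = 1` on. The value `C_3(α)` follows from `C_1(α) = 2` by applying the ratio twice.
-/

open Complex Metric Set

/-- `A_n(α) = Γ(n+1-2α)/(n! Γ(2-2α))`. -/
noncomputable def zalcA (α : ℝ) (n : ℕ) : ℝ :=
  Real.Gamma ((n : ℝ) + 1 - 2*α) / ((Nat.factorial n : ℝ) * Real.Gamma (2 - 2*α))

/-- `C_n(α) = 2 A_{2n-1}(α) / A_n(α)²`. -/
noncomputable def zalcC (α : ℝ) (n : ℕ) : ℝ :=
  2 * zalcA α (2*n - 1) / (zalcA α n)^2

lemma zalcA_one {α : ℝ} (hα : α < 1) : zalcA α 1 = 1 := by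
  have hΓ : Real.Gamma (2 - 2 * α) ≠ 0 := (Real.Gamma_pos_of_pos (by linarith)).ne'
  have harg : ((1 : ℕ) : ℝ) + 1 - 2 * α = 2 - 2 * α := by norm_num
  rw [zalcA, harg, Nat.factorial_one, Nat.cast_one, one_mul, div_self hΓ]

lemma zalcA_pos {α : ℝ} (hα : α < 1) {n : ℕ} (hn : 1 ≤ n) : 0 < zalcA α n := by
  have hn' : (1 : ℝ) ≤ n := mod_cast hn
  have hnum : 0 < Real.Gamma ((n : ℝ) + 1 - 2 * α) := Real.Gamma_pos_of_pos (by linarith)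
  have hden : 0 < Real.Gamma (2 - 2 * α) := Real.Gamma_pos_of_pos (by linarith)
  unfold zalcA
  positivity

lemma zalcA_succ {α : ℝ} {n : ℕ} (h : (n : ℝ) + 1 - 2 * α ≠ 0) :
    zalcA α (n + 1) = zalcA α n * (((n : ℝ) + 1 - 2 * α) / (n + 1)) := by
  have harg : ((n + 1 : ℕ) : ℝ) + 1 - 2 * α = ((n : ℝ) + 1 - 2 * α) + 1 := by push_cast; ring
  rw [zalcA, zalcA, harg, Real.Gamma_add_one h, Nat.factorial_succ, Nat.cast_mul, Nat.cast_succ,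
    div_mul_div_comm]
  ring

lemma zalcC_one {α : ℝ} (hα : α < 1) : zalcC α 1 = 2 := by
  norm_num [zalcC, zalcA_one hα]

lemma zalcC_pos {α : ℝ} (hα : α < 1) {n : ℕ} (hn : 1 ≤ n) : 0 < zalcC α n := by
  have hodd : 0 < zalcA α (2 * n - 1) := zalcA_pos hα (by omega)
  have hA : 0 < zalcA α n := zalcA_pos hα hn
  unfold zalcC
  positivity

lemma zalcC_succ {α : ℝ} (hα : α < 1) {n : ℕ} (hn : 1 ≤ n) :
    zalcC α (n + 1) = zalcC α n *
      ((2 * n - 2 * α) * (2 * n + 1 - 2 * α) * (n + 1) ^ 2 /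
        (2 * n * (2 * n + 1) * (n + 1 - 2 * α) ^ 2)) := by
  have hn' : (1 : ℝ) ≤ n := mod_cast hn
  have hodd : zalcA α (2 * n) = zalcA α (2 * n - 1) * ((2 * n - 2 * α) / (2 * n)) := by
    have hcast : ((2 * n - 1 : ℕ) : ℝ) + 1 = 2 * n := by
      rw [← Nat.cast_add_one, Nat.sub_add_cancel (by omega), Nat.cast_mul, Nat.cast_ofNat]
    have hsucc := zalcA_succ (α := α) (n := 2 * n - 1) (by rw [hcast]; linarith)
    rwa [hcast, Nat.sub_add_cancel (by omega)] at hsucc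
  have heven : zalcA α (2 * n + 1) =
      zalcA α (2 * n) * ((2 * n + 1 - 2 * α) / (2 * n + 1)) := by
    have hsucc := zalcA_succ (α := α) (n := 2 * n) (by push_cast; linarith)
    rwa [Nat.cast_mul, Nat.cast_ofNat] at hsucc
  have hindex : 2 * (n + 1) - 1 = 2 * n + 1 := by omega
  have hpos : 0 < (n : ℝ) + 1 - 2 * α := by linarith
  have hA : 0 < zalcA α n := zalcA_pos hα hn
  rw [zalcC, zalcC, hindex, heven, hodd, zalcA_succ hpos.ne']
  field_simp

lemma zalcC_three {α : ℝ} (hα : α < 1) :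
    zalcC α 3 = (3/5) * ((2*α - 4) * (2*α - 5)) / ((2*α - 2) * (2*α - 3)) := by
  have h₁ : 1 - α ≠ 0 := by linarith
  have h₃ : 3 - 2 * α ≠ 0 := by linarith
  have hC₂ : zalcC α 2 = 4 / 3 * ((3 - 2 * α) / (2 - 2 * α)) := by
    rw [zalcC_succ hα le_rfl, zalcC_one hα, Nat.cast_one, one_add_one_eq_two]
    field_simp
    ring
  have hC₃ : zalcC α 3 = 3 / 5 * ((4 - 2 * α) * (5 - 2 * α)) / ((2 - 2 * α) * (3 - 2 * α)) := by
    rw [zalcC_succ hα one_le_two, hC₂, Nat.cast_ofNat, two_add_one_eq_three]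
    field_simp
    ring
  rw [hC₃]
  congr 1 <;> ring

lemma zalcC_ratio_num_lt_den {x b : ℝ} (hx : 1 ≤ x) (hb : 0 < b) :
    (2 * x + b) * (2 * x + 1 + b) * (x + 1) ^ 2 < 2 * x * (2 * x + 1) * (x + 1 + b) ^ 2 := by
  have hlin : 0 < 4 * x ^ 2 - x - 1 := by nlinarith
  have hquad : 0 < 3 * x ^ 2 - 1 := by nlinarith
  rw [← sub_pos]
  calc 0 < b * ((x + 1) * (4 * x ^ 2 - x - 1) + b * (3 * x ^ 2 - 1)) := by positivity
    _ = _ := by ring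

lemma zalcC_succ_lt {α : ℝ} (hα : α < 0) {n : ℕ} (hn : 1 ≤ n) :
    zalcC α (n + 1) < zalcC α n := by
  have hα' : α < 1 := hα.trans one_pos
  have hn' : (1 : ℝ) ≤ n := mod_cast hn
  have hpos : 0 < (n : ℝ) + 1 - 2 * α := by linarith
  rw [zalcC_succ hα' hn]
  refine mul_lt_of_lt_one_right (zalcC_pos hα' hn) ((div_lt_one (by positivity)).2 ?_)
  simpa only [← sub_eq_add_neg] using
    zalcC_ratio_num_lt_den hn' (b := -(2 * α)) (by linarith)

lemma strictAntiOn_zalcC {α : ℝ} (hα : α < 0) : StrictAntiOn (zalcC α) (Ici 1) :=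
  strictAntiOn_of_succ_lt ordConnected_Ici fun _ _ hn _ ↦ zalcC_succ_lt hα hn

theorem stmt_5_general {α : ℝ} (hα : α < 0) :
    StrictAntiOn (zalcC α) (Ici 1) ∧
    zalcC α 3 = (3/5) * ((2*α - 4) * (2*α - 5)) / ((2*α - 2) * (2*α - 3)) :=
  ⟨strictAntiOn_zalcC hα, zalcC_three (hα.trans one_pos)⟩

theorem stmt_5 (α : ℝ) (hα₁ : -(1/2 : ℝ) ≤ α) (hα₂ : α < 0) :
    (∀ m n : ℕ, 3 ≤ m → m < n → zalcC α n < zalcC α m) ∧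
    (∀ n : ℕ, 3 ≤ n → zalcC α n ≤ zalcC α 3) ∧
    zalcC α 3 = (3/5) * ((2*α - 4) * (2*α - 5)) / ((2*α - 2) * (2*α - 3)) := by
  obtain ⟨hanti, hC₃⟩ := stmt_5_general hα₂
  have hmem {n : ℕ} (hn : 3 ≤ n) : n ∈ Ici 1 := le_trans (by norm_num) hn
  exact ⟨fun m n hm hmn ↦ hanti (hmem hm) (hmem (hm.trans hmn.le)) hmn,
    fun n hn ↦ hanti.antitoneOn (hmem le_rfl) (hmem hn) hn, hC₃⟩
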